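/- Order polynomial of enriched toric [w]-partitions: let w ∈ S_n with n ≥ 1, set c = cpk(w), and let m ≥ 0 be an integer. Then the number of functions f : [n] → ℙ′ that are enriched v-partitions for some rotation v ∈ [w] and satisfy |f(i)| ≤ m for all i equals (n − 2c)·2^{2c+1}·Σ_{k=0}^{m−1−c} C(n+k,k)·C(n−2c−1, m−1−c−k) + c·2^{2c}·Σ_{k=0}^{m−c} C(n+k,k)·C(n−2c+1, m−c−k), where C(a,b) denotes the binomial coefficient with the convention C(a,b) = 0 when a < 0 (this only matters when n = 2c, in which case the entire first term vanishes because of the factor n − 2c = 0), and empty sums are 0. -/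

import Mathlib

/-- The Stembridge total order `⪯` on the nonzero integers `ℙ′`:
`a ⪯ b` iff `a = b`, or `|a| < |b|`, or `|a| = |b|` with `a < 0 < b`. -/
def ple (a b : ℤ) : Prop :=
  a = b ∨ |a| < |b| ∨ (|a| = |b| ∧ a < 0 ∧ 0 < b)

/-- `f : [n] → ℙ′` is an enriched `v`-partition, where the word of `v` is
`v 0, v 1, …, v (n-1)` (0-indexed positions). -/
def IsEnrichedLin (n : ℕ) (v : Fin n → Fin n) (f : Fin n → ℤ) : Prop :=
  (∀ i, f i ≠ 0) ∧
  ∀ j k : Fin n, (j : ℕ) + 1 = (k : ℕ) →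
    ple (f (v j)) (f (v k)) ∧
      (f (v j) = f (v k) → (0 < f (v j) → v j < v k) ∧ (f (v j) < 0 → v k < v j))

/-- The `i`-th rotation of `w`: `rotF n i w` has `j`-th letter `w (j + i)`. -/
def rotF (n : ℕ) (i : Fin n) (w : Fin n → Fin n) : Fin n → Fin n :=
  fun j => w (j + i)

/-- The cyclic peak set `cPk w` (0-indexed positions, indices mod `n`). -/
def cPkF (n : ℕ) [NeZero n] (w : Fin n → Fin n) : Finset (Fin n) :=
  Finset.univ.filter fun i => w (i - 1) < w i ∧ w (i + 1) < w i

/-!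
Read the word of `v` from left to right and code the values in `ℙ′` by natural numbers along `⪯`.
In the generating function of the number of enriched `v`-partitions bounded by `m`, each new letter
contributes a factor `(1 + X) / (1 - X)`, except that a letter completing a peak contributes
`4X / ((1 - X) (1 + X))`. This gives Stembridge's formula
`∑ Ω_v(m) X ^ m = 2X (4X) ^ pk v (1 + X) ^ (n - 1 - 2 pk v) / (1 - X) ^ (n + 1)`.

An enriched `v`-partition determines `v`, so the sets `E(v)` over the rotations of `w` are disjoint
and the count is a sum over rotations. Cutting the cyclic word before position `i` destroys a cyclic
peak iff one of `i`, `i - 1` is a cyclic peak. Two cyclic peaks are never adjacent, so this happens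
for exactly `2c` of the `n` cuts, leaving `c - 1` peaks, while the other `n - 2c` cuts leave `c`.
-/

open Finset PowerSeries

lemma ple_trans {a b c : ℤ} (hab : ple a b) (hbc : ple b c) : ple a c := by
  simp only [ple, Int.abs_eq_natAbs] at *
  omega

lemma ple_antisymm {a b : ℤ} (hab : ple a b) (hba : ple b a) : a = b := by
  simp only [ple, Int.abs_eq_natAbs] at *
  omega

/-- The condition that `IsEnrichedLin` puts on two consecutive letters `a`, `b` of the word, stated
for any two letters: when `f` vanishes nowhere, it is a strict total order on the letters. -/
def EnrichedStep {α : Type*} [LT α] (f : α → ℤ) (a b : α) : Prop :=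
  ple (f a) (f b) ∧ (f a = f b → (0 < f a → a < b) ∧ (f a < 0 → b < a))

namespace EnrichedStep

variable {α : Type*} [Preorder α] {f : α → ℤ} {a b c : α}

lemma trans (hab : EnrichedStep f a b) (hbc : EnrichedStep f b c) : EnrichedStep f a c := by
  refine ⟨ple_trans hab.1 hbc.1, fun hac => ?_⟩
  have hfab : f a = f b := ple_antisymm hab.1 (hac ▸ hbc.1)
  have hfbc : f b = f c := hfab.symm.trans hac
  exact ⟨fun h => ((hab.2 hfab).1 h).trans ((hbc.2 hfbc).1 (hfab ▸ h)),
    fun h => ((hbc.2 hfbc).2 (hfab ▸ h)).trans ((hab.2 hfab).2 h)⟩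

instance : IsTrans α (EnrichedStep f) := ⟨fun _ _ _ => trans⟩

lemma asymm (ha : f a ≠ 0) (hab : EnrichedStep f a b) : ¬ EnrichedStep f b a := by
  intro hba
  have hf : f a = f b := ple_antisymm hab.1 hba.1
  rcases ha.lt_or_gt with h | h
  · exact lt_asymm ((hab.2 hf).2 h) ((hba.2 hf.symm).2 (hf ▸ h))
  · exact lt_asymm ((hab.2 hf).1 h) ((hba.2 hf.symm).1 (hf ▸ h))

end EnrichedStep

lemma isEnrichedLin_iff_castSucc_succ {n : ℕ} {v : Fin (n + 1) → Fin (n + 1)}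
    {f : Fin (n + 1) → ℤ} :
    IsEnrichedLin (n + 1) v f ↔
      (∀ i, f i ≠ 0) ∧ ∀ j : Fin n, EnrichedStep f (v j.castSucc) (v j.succ) := by
  refine and_congr_right fun _ => ⟨fun h j => h _ _ rfl, fun h j k hjk => ?_⟩
  have hj : (j : ℕ) < n := by omega
  obtain rfl : k = Fin.succ ⟨j, hj⟩ := Fin.ext hjk.symm
  exact h ⟨j, hj⟩

namespace IsEnrichedLin

variable {n : ℕ}

lemma step_of_lt {v : Fin (n + 1) → Fin (n + 1)} {f : Fin (n + 1) → ℤ}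
    (h : IsEnrichedLin (n + 1) v f) {i j : Fin (n + 1)} (hij : i < j) :
    EnrichedStep f (v i) (v j) :=
  (Fin.liftFun_iff_succ (EnrichedStep f)).2 (isEnrichedLin_iff_castSucc_succ.1 h).2 hij

/-- `f` determines `v` by sorting: the word of `v` lists the letters in `EnrichedStep f` order. -/
lemma perm_unique {v v' : Equiv.Perm (Fin (n + 1))} {f : Fin (n + 1) → ℤ}
    (h : IsEnrichedLin (n + 1) v f) (h' : IsEnrichedLin (n + 1) v' f) : v = v' := by
  have hmono : StrictMono (v.trans v'.symm) := fun i j hij => by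
    by_contra hle
    have hne : v'.symm (v i) ≠ v'.symm (v j) := by simpa using hij.ne
    have hstep := h'.step_of_lt (lt_of_le_of_ne (not_lt.1 hle) hne.symm)
    simp only [Equiv.trans_apply, Equiv.apply_symm_apply] at hstep
    exact (h.step_of_lt hij).asymm (h.1 _) hstep
  have hid : ⇑(v.trans v'.symm) = id :=
    (hmono.range_inj strictMono_id).1 (by simp only [Equiv.range_eq_univ, Set.range_id])
  ext i
  simpa using congrArg (fun j => (v' j : ℕ)) (congrFun hid i)

end IsEnrichedLin

/-- The order isomorphism from `ℕ` to `ℙ′`: `0, 1, 2, 3, …` go to `-1, 1, -2, 2, …`, so that odd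
codes stand for positive values. -/
def ofCode (x : ℕ) : ℤ := if Odd x then (x / 2 + 1 : ℕ) else -(x / 2 + 1 : ℕ)

lemma ofCode_injective : Function.Injective ofCode := by
  intro x y h
  simp only [ofCode, Nat.odd_iff] at h
  split_ifs at h <;> omega

lemma natAbs_ofCode (x : ℕ) : (ofCode x).natAbs = x / 2 + 1 := by
  unfold ofCode
  split_ifs <;> omega

lemma ofCode_ne_zero (x : ℕ) : ofCode x ≠ 0 := by
  rw [← Int.natAbs_ne_zero, natAbs_ofCode]
  exact Nat.succ_ne_zero _

lemma ofCode_pos_iff {x : ℕ} : 0 < ofCode x ↔ Odd x := by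
  simp only [ofCode, Nat.odd_iff]
  split_ifs <;> omega

lemma ofCode_neg_iff {x : ℕ} : ofCode x < 0 ↔ ¬ Odd x := by
  rw [← ofCode_pos_iff, not_lt, le_iff_lt_or_eq, or_iff_left (ofCode_ne_zero x)]

lemma exists_ofCode_eq {a : ℤ} (ha : a ≠ 0) : ∃ x, ofCode x = a := by
  refine ⟨if 0 < a then 2 * a.natAbs - 1 else 2 * a.natAbs - 2, ?_⟩
  simp only [ofCode, Nat.odd_iff]
  split_ifs <;> omega

lemma ple_ofCode_iff {x y : ℕ} : ple (ofCode x) (ofCode y) ↔ x ≤ y := by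
  simp only [ple, Int.abs_eq_natAbs, natAbs_ofCode, ofCode_injective.eq_iff, ofCode_pos_iff,
    ofCode_neg_iff, Nat.odd_iff]
  omega

/-- `EnrichedStep` in terms of the codes `x`, `y` of the two values, where `p` tells whether the
step is an ascent. -/
def CodedStep (p : Prop) (x y : ℕ) : Prop := x < y ∨ x = y ∧ (Odd x ↔ p)

instance (p : Prop) [Decidable p] (x y : ℕ) : Decidable (CodedStep p x y) :=
  inferInstanceAs (Decidable (_ ∨ _))

lemma CodedStep.le {p : Prop} {x y : ℕ} (h : CodedStep p x y) : x ≤ y :=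
  h.elim le_of_lt fun h => h.1.le

lemma codedStep_iff_lt_ite {p : Prop} [Decidable p] {x y : ℕ} :
    CodedStep p x y ↔ x < if Odd y ↔ p then y + 1 else y := by
  unfold CodedStep
  split_ifs with h
  · rw [Nat.lt_succ_iff_lt_or_eq]
    exact or_congr_right (and_iff_left_of_imp fun hxy => hxy ▸ h)
  · exact or_iff_left fun hxy => h (hxy.1 ▸ hxy.2)

lemma enrichedStep_iff_codedStep {α : Type*} [LinearOrder α] {f : α → ℤ} {a b : α} (hab : a ≠ b)
    {x y : ℕ} (hx : ofCode x = f a) (hy : ofCode y = f b) :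
    EnrichedStep f a b ↔ CodedStep (a < b) x y := by
  have hba : b < a ↔ ¬ a < b := by rw [not_lt, le_iff_lt_or_eq, or_iff_left hab.symm]
  rw [EnrichedStep, ← hx, ← hy, ple_ofCode_iff, ofCode_injective.eq_iff, ofCode_pos_iff,
    ofCode_neg_iff, hba, CodedStep, le_iff_lt_or_eq]
  grind

section CodedSeqs

variable (A : ℕ → Prop) [DecidablePred A]

/-- The sequences of `k + 1` codes below `M` whose `j`-th step is allowed for a word that ascends
at the positions satisfying `A`. -/
def codedSeqs (k M : ℕ) : Finset (Fin (k + 1) → ℕ) :=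
  {g ∈ Fintype.piFinset fun _ => range M | ∀ j : Fin k, CodedStep (A j) (g j.castSucc) (g j.succ)}

variable {A}

lemma mem_codedSeqs {k M : ℕ} {g : Fin (k + 1) → ℕ} :
    g ∈ codedSeqs A k M ↔
      g (Fin.last k) < M ∧ ∀ j : Fin k, CodedStep (A j) (g j.castSucc) (g j.succ) := by
  simp only [codedSeqs, mem_filter, Fintype.mem_piFinset, mem_range]
  refine and_congr_left fun h => ⟨fun hM => hM _, fun hM i => ?_⟩
  have hmono : Monotone g := Fin.monotone_iff_le_succ.2 fun j => (h j).le
  exact (hmono (Fin.le_last i)).trans_lt hM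

lemma snoc_mem_codedSeqs {k M x : ℕ} {g : Fin (k + 1) → ℕ} :
    (Fin.snoc g x : Fin (k + 2) → ℕ) ∈ codedSeqs A (k + 1) M ↔
      x < M ∧ g ∈ codedSeqs A k (if Odd x ↔ A k then x + 1 else x) := by
  simp only [mem_codedSeqs, Fin.forall_fin_succ', Fin.snoc_last, Fin.succ_last, Fin.snoc_castSucc,
    Fin.succ_castSucc, Fin.val_castSucc, Fin.val_last, codedStep_iff_lt_ite (p := A k)]
  tauto

/-- Sequences of codes at most `M` either stay below `M` or end in `M`. -/
lemma card_codedSeqs_succ_succ (k M : ℕ) :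
    #(codedSeqs A (k + 1) (M + 1)) =
      #(codedSeqs A (k + 1) M) + #(codedSeqs A k (if Odd M ↔ A k then M + 1 else M)) := by
  have hinj : Function.Injective fun g : Fin (k + 1) → ℕ => (Fin.snoc g M : Fin (k + 2) → ℕ) :=
    fun _ _ h => (Fin.snoc_inj.1 h).1
  have hsplit : codedSeqs A (k + 1) (M + 1) = codedSeqs A (k + 1) M ∪
      (codedSeqs A k (if Odd M ↔ A k then M + 1 else M)).image fun g => Fin.snoc g M := by
    ext g
    obtain ⟨g, x, rfl⟩ : ∃ g' x, g = (Fin.snoc g' x : Fin (k + 2) → ℕ) :=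
      ⟨_, _, (Fin.snoc_init_self g).symm⟩
    simp only [mem_union, mem_image, snoc_mem_codedSeqs, Fin.snoc_inj, Nat.lt_succ_iff_lt_or_eq]
    constructor
    · rintro ⟨h | rfl, hg⟩
      exacts [.inl ⟨h, hg⟩, .inr ⟨g, hg, rfl, rfl⟩]
    · rintro (⟨h, hg⟩ | ⟨g, hg, rfl, rfl⟩)
      exacts [⟨.inl h, hg⟩, ⟨.inr rfl, hg⟩]
  rw [hsplit, card_union_of_disjoint, card_image_of_injective _ hinj]
  simp only [disjoint_right, forall_mem_image, snoc_mem_codedSeqs]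
  exact fun g _ h => lt_irrefl M h.1

lemma card_codedSeqs_zero_left (M : ℕ) : #(codedSeqs A 0 M) = M := by
  simp [codedSeqs]

lemma codedSeqs_zero_right (k : ℕ) : codedSeqs A k 0 = ∅ := by
  ext g
  simp [mem_codedSeqs]

end CodedSeqs

/-- The ascents of the word `v`. Positions are natural numbers, reduced modulo the length. -/
def IsAscentAt {α : Type*} [LT α] {n : ℕ} (v : Fin (n + 1) → α) (j : ℕ) : Prop :=
  v (Fin.ofNat (n + 1) j) < v (Fin.ofNat (n + 1) (j + 1))

instance {α : Type*} [LT α] [DecidableLT α] {n : ℕ} (v : Fin (n + 1) → α) :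
    DecidablePred (IsAscentAt v) := fun _ => inferInstanceAs (Decidable (_ < _))

lemma isAscentAt_val {α : Type*} [LT α] {n : ℕ} (v : Fin (n + 1) → α) (j : Fin (n + 1)) :
    IsAscentAt v j ↔ v j < v (j + 1) := by
  have hsucc : Fin.ofNat (n + 1) (j + 1) = j + 1 := by ext; simp [Fin.val_add]
  rw [IsAscentAt, Fin.ofNat_val_eq_self, hsucc]

/-- The enriched `v`-partitions `f` with `|f i| ≤ m` for all `i`; as a function of `m`, their
number is the enriched order polynomial of `v`. -/
def boundedEnriched {n : ℕ} (v : Fin n → Fin n) (m : ℕ) : Set (Fin n → ℤ) :=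
  {f | IsEnrichedLin n v f ∧ ∀ i, (f i).natAbs ≤ m}

section BoundedEnriched

variable {n : ℕ} (v : Equiv.Perm (Fin (n + 1)))

lemma mem_boundedEnriched_iff_mem_codedSeqs {m : ℕ} {f : Fin (n + 1) → ℤ} {g : Fin (n + 1) → ℕ}
    (hg : ∀ i, ofCode (g i) = f (v i)) :
    f ∈ boundedEnriched v m ↔ g ∈ codedSeqs (IsAscentAt v) n (2 * m) := by
  have hne : ∀ i, f i ≠ 0 := v.forall_congr_right.1 fun i => hg i ▸ ofCode_ne_zero _
  have hstep : ∀ j : Fin n, EnrichedStep f (v j.castSucc) (v j.succ) ↔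
      CodedStep (IsAscentAt v j) (g j.castSucc) (g j.succ) := fun j => by
    rw [← Fin.val_castSucc, isAscentAt_val, Fin.coeSucc_eq_succ,
      enrichedStep_iff_codedStep (v.injective.ne j.castSucc_lt_succ.ne) (hg _) (hg _)]
  have hbound : (∀ i, (f i).natAbs ≤ m) ↔ ∀ i, g i < 2 * m := by
    rw [← v.forall_congr_right]
    refine forall_congr' fun i => ?_
    rw [← hg, natAbs_ofCode]
    omega
  simp only [boundedEnriched, Set.mem_ofPred_eq, isEnrichedLin_iff_castSucc_succ, hstep, hbound,
    codedSeqs, mem_filter, Fintype.mem_piFinset, mem_range, and_iff_right hne]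
  exact and_comm

lemma boundedEnriched_eq_image (m : ℕ) :
    boundedEnriched v m =
      (fun (g : Fin (n + 1) → ℕ) a => ofCode (g (v.symm a))) ''
        (codedSeqs (IsAscentAt v) n (2 * m) : Set (Fin (n + 1) → ℕ)) := by
  ext f
  constructor
  · intro hf
    choose g hg using fun i => exists_ofCode_eq (hf.1.1 (v i))
    refine ⟨g, (mem_boundedEnriched_iff_mem_codedSeqs v hg).1 hf, ?_⟩
    simp only [hg, Equiv.apply_symm_apply]
  · rintro ⟨g, hg, rfl⟩
    exact (mem_boundedEnriched_iff_mem_codedSeqs v (by simp)).2 hg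

lemma ncard_boundedEnriched (m : ℕ) :
    (boundedEnriched v m).ncard = #(codedSeqs (IsAscentAt v) n (2 * m)) := by
  rw [boundedEnriched_eq_image, Set.ncard_image_of_injective, Set.ncard_coe_finset]
  exact ofCode_injective.comp_left.comp v.symm.surjective.injective_comp_right

lemma finite_boundedEnriched (m : ℕ) : (boundedEnriched v m).Finite := by
  rw [boundedEnriched_eq_image]
  exact (finite_toSet _).image _

end BoundedEnriched

section Series

variable (A : ℕ → Prop) [DecidablePred A]

/-- The generating function, in the bound `m`, of the coded sequences with values at most `m` in
absolute value. -/
noncomputable def evenSeries (k : ℕ) : ℤ⟦X⟧ := .mk fun m => (#(codedSeqs A k (2 * m)) : ℤ)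

/-- The companion of `evenSeries` that also admits the value `-(m + 1)`. -/
noncomputable def oddSeries (k : ℕ) : ℤ⟦X⟧ := .mk fun m => (#(codedSeqs A k (2 * m + 1)) : ℤ)

lemma oddSeries_succ (k : ℕ) :
    oddSeries A (k + 1) = evenSeries A (k + 1) + if A k then evenSeries A k else oddSeries A k := by
  ext m
  have heven : ¬ Odd (2 * m) := Nat.not_odd_iff_even.2 (even_two_mul m)
  by_cases h : A k <;>
    simp [oddSeries, evenSeries, card_codedSeqs_succ_succ, heven, h]

lemma evenSeries_succ (k : ℕ) :
    evenSeries A (k + 1) =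
      X * oddSeries A (k + 1) + if A k then evenSeries A k else X * oddSeries A k := by
  ext m
  cases m with
  | zero => by_cases h : A k <;> simp [evenSeries, codedSeqs_zero_right, h]
  | succ m =>
    have hodd : Odd (2 * m + 1) := odd_two_mul_add_one m
    by_cases h : A k <;>
      simp [oddSeries, evenSeries, card_codedSeqs_succ_succ, mul_add_one, coeff_succ_X_mul, hodd, h]

variable {A}

lemma evenSeries_succ_of_ascent {k : ℕ} (h : A k) :
    (1 - X) * evenSeries A (k + 1) = (1 + X) * evenSeries A k := by
  have hodd := oddSeries_succ A k
  have heven := evenSeries_succ A k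
  rw [if_pos h] at hodd heven
  linear_combination heven + X * hodd

lemma evenSeries_succ_of_not_ascent {k : ℕ} (h : ¬ A k) :
    (1 - X) * evenSeries A (k + 1) = 2 * X * oddSeries A k := by
  have hodd := oddSeries_succ A k
  have heven := evenSeries_succ A k
  rw [if_neg h] at hodd heven
  linear_combination heven + X * hodd

lemma one_sub_X_sq_mul_evenSeries_zero : (1 - X) ^ 2 * evenSeries A 0 = 2 * X := by
  have h : evenSeries A 0 = 2 * (X * .mk fun m => ((1 + m).choose 1 : ℤ)) := by
    ext m
    cases m <;> simp [evenSeries, card_codedSeqs_zero_left, two_mul, coeff_succ_X_mul, add_comm]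
  have hinv := mk_add_choose_mul_one_sub_pow_eq_one ℤ 1
  rw [h]
  linear_combination 2 * X * hinv

lemma two_mul_X_mul_oddSeries_zero : 2 * X * oddSeries A 0 = (1 + X) * evenSeries A 0 := by
  ext m
  cases m with
  | zero => simp [evenSeries, card_codedSeqs_zero_left, mul_assoc]
  | succ m =>
    simp only [oddSeries, evenSeries, card_codedSeqs_zero_left, two_mul, add_mul, one_mul, map_add,
      coeff_succ_X_mul, coeff_mk]
    push_cast
    ring

lemma two_mul_X_mul_oddSeries_succ_of_not_ascent {k : ℕ} (h : ¬ A k) :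
    2 * X * oddSeries A (k + 1) = (1 + X) * evenSeries A (k + 1) := by
  have hodd := oddSeries_succ A k
  have heven := evenSeries_succ A k
  rw [if_neg h] at hodd heven
  linear_combination X * hodd - heven

lemma one_add_X_mul_oddSeries_succ_of_ascent {k : ℕ} (h : A k) :
    (1 + X) * oddSeries A (k + 1) = 2 * evenSeries A (k + 1) := by
  have hodd := oddSeries_succ A k
  rw [if_pos h] at hodd
  linear_combination (1 + X) * hodd - evenSeries_succ_of_ascent h

lemma evenSeries_succ_of_peak {k : ℕ} (h : A (k - 1)) (h' : ¬ A k) :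
    (1 - X) * (1 + X) * evenSeries A (k + 1) = 4 * X * evenSeries A k := by
  cases k with
  | zero => exact absurd h h'
  | succ k =>
    rw [Nat.add_sub_cancel] at h
    linear_combination (1 + X) * evenSeries_succ_of_not_ascent h' +
      2 * X * one_add_X_mul_oddSeries_succ_of_ascent h

variable (A) in
/-- The number of peaks among the first `k` letters of a word that ascends at the positions
satisfying `A`. The first letter is never a peak: for `j = 0` the truncated `j - 1` is `j`. -/
def peakCount (k : ℕ) : ℕ := #{j ∈ range k | A (j - 1) ∧ ¬ A j}

lemma peakCount_succ (k : ℕ) :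
    peakCount A (k + 1) = peakCount A k + if A (k - 1) ∧ ¬ A k then 1 else 0 := by
  simp only [peakCount, card_filter, sum_range_succ]

lemma two_mul_peakCount_le (k : ℕ) : 2 * peakCount A k ≤ k := by
  induction k using Nat.twoStepInduction with
  | zero => simp [peakCount]
  | one => simp [peakCount, filter_singleton]
  | more k ih _ =>
    rw [peakCount_succ, peakCount_succ, Nat.add_sub_cancel]
    split_ifs <;> first | omega | tauto

lemma evenSeries_succ_of_not_peak {k : ℕ} (h : ¬ (A (k - 1) ∧ ¬ A k)) :
    (1 - X) * evenSeries A (k + 1) = (1 + X) * evenSeries A k := by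
  by_cases hk : A k
  · exact evenSeries_succ_of_ascent hk
  · rw [evenSeries_succ_of_not_ascent hk]
    cases k with
    | zero => exact two_mul_X_mul_oddSeries_zero
    | succ k => exact two_mul_X_mul_oddSeries_succ_of_not_ascent fun h' => h ⟨h', hk⟩

lemma one_add_X_pow_mul_evenSeries (k : ℕ) :
    (1 - X) ^ (k + 2) * (1 + X) ^ (2 * peakCount A k) * evenSeries A k =
      2 * X * (4 * X) ^ peakCount A k * (1 + X) ^ k := by
  induction k with
  | zero => simpa [peakCount] using one_sub_X_sq_mul_evenSeries_zero
  | succ k ih =>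
    rw [peakCount_succ]
    split_ifs with h
    · linear_combination (4 * X) * (1 + X) * ih + (1 - X) ^ (k + 2) *
        (1 + X) ^ (2 * peakCount A k + 1) * evenSeries_succ_of_peak h.1 h.2
    · linear_combination (1 + X) * ih + (1 - X) ^ (k + 2) *
        (1 + X) ^ (2 * peakCount A k) * evenSeries_succ_of_not_peak h

lemma one_sub_X_pow_mul_evenSeries (k : ℕ) :
    (1 - X) ^ (k + 2) * evenSeries A k =
      2 * X * (4 * X) ^ peakCount A k * (1 + X) ^ (k - 2 * peakCount A k) := by
  have hne : (1 + X : ℤ⟦X⟧) ≠ 0 := fun h => by simpa using congrArg constantCoeff h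
  refine mul_left_cancel₀ (pow_ne_zero (2 * peakCount A k) hne) ?_
  have hpow : (1 + X : ℤ⟦X⟧) ^ k =
      (1 + X) ^ (2 * peakCount A k) * (1 + X) ^ (k - 2 * peakCount A k) := by
    rw [← pow_add, Nat.add_sub_cancel' (two_mul_peakCount_le k)]
  linear_combination one_add_X_pow_mul_evenSeries (A := A) k +
    2 * X * (4 * X) ^ peakCount A k * hpow

end Series

section CyclicPeaks

variable {n : ℕ} [NeZero n]

/-- The peak set `Pk v` of the linear word `v`: the cyclic peaks other than the first position `0`
and the last position `-1`. -/
def pkF (n : ℕ) [NeZero n] (v : Fin n → Fin n) : Finset (Fin n) := cPkF n v \ {0, -1}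

lemma mem_cPkF {w : Fin n → Fin n} {i : Fin n} :
    i ∈ cPkF n w ↔ w (i - 1) < w i ∧ w (i + 1) < w i := by
  simp [cPkF]

lemma sub_one_notMem_cPkF {w : Fin n → Fin n} {i : Fin n} (hi : i ∈ cPkF n w) :
    i - 1 ∉ cPkF n w := by
  intro hi'
  have h := (mem_cPkF.1 hi').2
  rw [sub_add_cancel] at h
  exact lt_asymm h (mem_cPkF.1 hi).1

lemma mem_cPkF_rotF {w : Fin n → Fin n} {i p : Fin n} :
    p ∈ cPkF n (rotF n i w) ↔ p + i ∈ cPkF n w := by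
  simp only [mem_cPkF, rotF, sub_add_eq_add_sub, add_right_comm p 1 i]

lemma card_pkF_rotF (w : Fin n → Fin n) (i : Fin n) :
    #(pkF n (rotF n i w)) = #(cPkF n w \ {i, i - 1}) := by
  refine card_equiv (Equiv.addRight i) fun p => ?_
  have hlast : p + i = i - 1 ↔ p = -1 := by rw [sub_eq_neg_add, add_left_inj]
  simp [pkF, mem_cPkF_rotF, hlast]

lemma card_pkF_rotF_add_ite (w : Fin n → Fin n) (i : Fin n) :
    #(pkF n (rotF n i w)) + (if i ∈ cPkF n w ∨ i - 1 ∈ cPkF n w then 1 else 0) =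
      #(cPkF n w) := by
  rw [card_pkF_rotF, ← card_sdiff_add_card_inter (cPkF n w) {i, i - 1}]
  congr 1
  by_cases hi : i ∈ cPkF n w
  · simp [hi, sub_one_notMem_cPkF hi, inter_insert_of_mem]
  · by_cases hi' : i - 1 ∈ cPkF n w <;> simp [hi, hi', inter_insert_of_notMem]

lemma card_filter_mem_cPkF_or_sub_one_mem (w : Fin n → Fin n) :
    #{i | i ∈ cPkF n w ∨ i - 1 ∈ cPkF n w} = 2 * #(cPkF n w) := by
  have hshift : #{i | i - 1 ∈ cPkF n w} = #(cPkF n w) :=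
    card_equiv (Equiv.subRight 1) (by simp)
  rw [filter_or, card_union_of_disjoint, hshift, filter_univ_mem, two_mul]
  rw [disjoint_filter]
  exact fun i _ => sub_one_notMem_cPkF

lemma two_mul_card_cPkF_le (w : Fin n → Fin n) : 2 * #(cPkF n w) ≤ n := by
  rw [← card_filter_mem_cPkF_or_sub_one_mem]
  exact (card_filter_le _ _).trans_eq (card_fin n)

end CyclicPeaks

lemma isAscentAt_sub_one_and_not_iff_mem_cPkF {n : ℕ} (v : Equiv.Perm (Fin (n + 1)))
    {j : Fin (n + 1)} (hj : j ≠ 0) :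
    IsAscentAt v (j - 1) ∧ ¬ IsAscentAt v j ↔ j ∈ cPkF (n + 1) v := by
  rw [← Fin.val_sub_one_of_ne_zero hj, isAscentAt_val, isAscentAt_val, sub_add_cancel, mem_cPkF,
    not_lt, and_congr_right_iff]
  refine fun hlt => ⟨fun hle => hle.lt_of_ne fun heq => ?_, le_of_lt⟩
  have hfix : j - 1 = j := sub_eq_of_eq_add (v.injective heq).symm
  exact hlt.ne (congrArg v hfix)

lemma peakCount_isAscentAt {n : ℕ} (v : Equiv.Perm (Fin (n + 1))) :
    peakCount (IsAscentAt v) n = #(pkF (n + 1) v) := by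
  have hlast : ∀ j : Fin (n + 1), j ≠ -1 ↔ (j : ℕ) < n := fun j => by
    rw [← eq_neg_of_add_eq_zero_left (Fin.last_add_one n), ← Fin.lt_last_iff_ne_last, Fin.lt_def,
      Fin.val_last]
  rw [peakCount, ← card_map Fin.valEmbedding]
  congr 1
  ext j
  simp only [mem_filter, mem_range, mem_map, Fin.valEmbedding_apply, pkF, mem_sdiff, mem_insert,
    mem_singleton, not_or, ← ne_eq, hlast]
  constructor
  · rintro ⟨hj, hpeak⟩
    have hj0 : (⟨j, hj.trans n.lt_succ_self⟩ : Fin (n + 1)) ≠ 0 := by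
      rintro h
      obtain rfl : j = 0 := congrArg Fin.val h
      exact hpeak.2 hpeak.1
    exact ⟨_, ⟨(isAscentAt_sub_one_and_not_iff_mem_cPkF v hj0).1 hpeak, hj0, hj⟩, rfl⟩
  · rintro ⟨j, ⟨hpeak, hj0, hj⟩, rfl⟩
    exact ⟨hj, (isAscentAt_sub_one_and_not_iff_mem_cPkF v hj0).2 hpeak⟩

/-- The generating function `∑ Ω_v(m) X ^ m` of the enriched order polynomial of `v`. -/
noncomputable def enrichedSeries {n : ℕ} (v : Fin n → Fin n) : ℤ⟦X⟧ :=
  .mk fun m => ((boundedEnriched v m).ncard : ℤ)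

lemma one_sub_X_pow_mul_enrichedSeries {n : ℕ} (v : Equiv.Perm (Fin (n + 1))) :
    (1 - X) ^ (n + 2) * enrichedSeries v =
      2 * X * (4 * X) ^ #(pkF (n + 1) v) * (1 + X) ^ (n - 2 * #(pkF (n + 1) v)) := by
  have hseries : enrichedSeries v = evenSeries (IsAscentAt v) n := by
    simp only [enrichedSeries, evenSeries, ncard_boundedEnriched]
  rw [hseries, one_sub_X_pow_mul_evenSeries, peakCount_isAscentAt]

section Toric

variable {n : ℕ} (w : Equiv.Perm (Fin (n + 1)))

lemma disjoint_boundedEnriched_rotF {i j : Fin (n + 1)} (hij : i ≠ j) (m : ℕ) :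
    Disjoint (boundedEnriched (rotF (n + 1) i w) m) (boundedEnriched (rotF (n + 1) j w) m) := by
  refine Set.disjoint_left.2 fun f hi hj => hij ?_
  have hrot : (Equiv.addRight i).trans w = (Equiv.addRight j).trans w := hi.1.perm_unique hj.1
  simpa using congrArg (· 0) hrot

lemma card_enrichedToric (m : ℕ) :
    Nat.card {f : Fin (n + 1) → ℤ //
        (∃ i, IsEnrichedLin (n + 1) (rotF (n + 1) i w) f) ∧ ∀ i, (f i).natAbs ≤ m} =
      ∑ i, (boundedEnriched (rotF (n + 1) i w) m).ncard := by
  have hunion : {f : Fin (n + 1) → ℤ | (∃ i, IsEnrichedLin (n + 1) (rotF (n + 1) i w) f) ∧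
      ∀ i, (f i).natAbs ≤ m} = ⋃ i, boundedEnriched (rotF (n + 1) i w) m := by
    ext f
    simp [boundedEnriched]
  have hfin : ∀ i, Finite (boundedEnriched (rotF (n + 1) i w) m) := fun i =>
    finite_boundedEnriched ((Equiv.addRight i).trans w) m
  calc Nat.card _ = Nat.card (⋃ i, boundedEnriched (rotF (n + 1) i w) m) := by rw [← hunion]; rfl
    _ = Nat.card (Σ i, boundedEnriched (rotF (n + 1) i w) m) :=
      Nat.card_congr (Set.unionEqSigmaOfDisjoint fun _ _ hij =>
        disjoint_boundedEnriched_rotF w hij m)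
    _ = ∑ i, (boundedEnriched (rotF (n + 1) i w) m).ncard := Nat.card_sigma

lemma one_sub_X_pow_mul_enrichedSeries_rotF {c : ℕ} (hc : c = #(cPkF (n + 1) w))
    (i : Fin (n + 1)) :
    (1 - X) ^ (n + 2) * enrichedSeries (rotF (n + 1) i w) =
      if i ∈ cPkF (n + 1) w ∨ i - 1 ∈ cPkF (n + 1) w then
        2 * X * (4 * X) ^ (c - 1) * (1 + X) ^ (n + 1 - 2 * c + 1)
      else 2 * X * (4 * X) ^ c * (1 + X) ^ (n + 1 - 2 * c - 1) := by
  have hle : 2 * c ≤ n + 1 := hc ▸ two_mul_card_cPkF_le w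
  have hpk := card_pkF_rotF_add_ite w i
  refine (one_sub_X_pow_mul_enrichedSeries ((Equiv.addRight i).trans w)).trans ?_
  change 2 * X * (4 * X) ^ #(pkF (n + 1) (rotF (n + 1) i w)) *
    (1 + X) ^ (n - 2 * #(pkF (n + 1) (rotF (n + 1) i w))) = _
  split_ifs at hpk ⊢
  · obtain rfl : c = #(pkF (n + 1) (rotF (n + 1) i w)) + 1 := hc.trans hpk.symm
    congr 2
    omega
  · obtain rfl : c = #(pkF (n + 1) (rotF (n + 1) i w)) := hc.trans hpk.symm
    congr 2
    omega

lemma one_sub_X_pow_mul_sum_enrichedSeries_rotF {c : ℕ} (hc : c = #(cPkF (n + 1) w)) :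
    (1 - X) ^ (n + 2) * ∑ i, enrichedSeries (rotF (n + 1) i w) =
      ((n + 1 - 2 * c) * 2 ^ (2 * c + 1)) • (X ^ (c + 1) * (1 + X) ^ (n + 1 - 2 * c - 1)) +
      (c * 2 ^ (2 * c)) • (X ^ c * (1 + X) ^ (n + 1 - 2 * c + 1)) := by
  have htouch := hc ▸ card_filter_mem_cPkF_or_sub_one_mem w
  have hrest := card_filter_add_card_filter_not (s := univ)
    fun i => i ∈ cPkF (n + 1) w ∨ i - 1 ∈ cPkF (n + 1) w
  rw [htouch, card_fin] at hrest
  have hpow : (2 : ℤ⟦X⟧) ^ (2 * c) = 4 ^ c := by rw [pow_mul]; norm_num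
  simp only [mul_sum, one_sub_X_pow_mul_enrichedSeries_rotF w hc]
  rw [sum_ite, sum_const, sum_const, htouch, Nat.eq_sub_of_add_eq' hrest, add_comm]
  simp only [nsmul_eq_mul]
  push_cast
  congr 1
  · rw [pow_succ 2, hpow]
    ring
  · rw [hpow]
    generalize n + 1 - 2 * c + 1 = e
    cases c with
    | zero => simp
    | succ c =>
      rw [Nat.add_sub_cancel]
      ring

end Toric

section Coefficients

variable {R : Type*} [CommRing R]

lemma eq_mul_mk_choose_of_one_sub_X_pow_mul_eq {N : ℕ} {F G : R⟦X⟧}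
    (h : (1 - X) ^ (N + 1) * F = G) : F = G * .mk fun k => ((N + k).choose N : R) := by
  have hinv := mk_add_choose_mul_one_sub_pow_eq_one R N
  linear_combination (.mk fun k => ((N + k).choose N : R)) * h - F * hinv

lemma coeff_one_add_X_pow (b k : ℕ) : coeff k ((1 + X : R⟦X⟧) ^ b) = b.choose k := by
  rw [← Polynomial.coeff_one_add_X_pow, ← Polynomial.coeff_coe]
  simp

lemma coeff_X_pow_mul_one_add_X_pow_mul_mk_choose (N a b m : ℕ) :
    coeff m (X ^ a * (1 + X) ^ b * .mk fun k => ((N + k).choose N : R)) =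
      ∑ k ∈ range (m + 1 - a), ((N + k).choose k * b.choose (m - a - k) : R) := by
  rw [mul_assoc, coeff_X_pow_mul']
  split_ifs with h
  · rw [mul_comm, coeff_mul, Nat.sum_antidiagonal_eq_sum_range_succ_mk, Nat.succ_eq_add_one,
      ← Nat.sub_add_comm h]
    refine sum_congr rfl fun k _ => ?_
    rw [coeff_mk, coeff_one_add_X_pow, Nat.choose_symm_add]
  · rw [Nat.sub_eq_zero_of_le (not_le.1 h), range_zero, sum_empty]

end Coefficients

/-- order polynomial of enriched toric `[w]`-partitions: for
`w ∈ S_n` (`n ≥ 1`), `c = cpk w` and `m ≥ 0`, the number of `f : [n] → ℙ′` that are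
enriched `v`-partitions for some rotation `v ∈ [w]` and satisfy `|f i| ≤ m` equals
`(n−2c)·2^{2c+1}·Σ_{k=0}^{m−1−c} C(n+k,k)·C(n−2c−1, m−1−c−k)
  + c·2^{2c}·Σ_{k=0}^{m−c} C(n+k,k)·C(n−2c+1, m−c−k)`
(empty sums are `0`; when `n = 2c` the whole first term vanishes thanks to the
factor `n − 2c = 0`). -/
theorem stmt16 (n : ℕ) [NeZero n] (w : Equiv.Perm (Fin n)) (m : ℕ)
    (c : ℕ) (hc : c = (cPkF n ⇑w).card) :
    Nat.card {f : Fin n → ℤ //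
        (∃ i : Fin n, IsEnrichedLin n (rotF n i ⇑w) f) ∧ ∀ i, (f i).natAbs ≤ m} =
      (n - 2 * c) * 2 ^ (2 * c + 1) *
        (∑ k ∈ Finset.range (m - c),
          Nat.choose (n + k) k * Nat.choose (n - 2 * c - 1) (m - 1 - c - k)) +
      c * 2 ^ (2 * c) *
        (∑ k ∈ Finset.range (m + 1 - c),
          Nat.choose (n + k) k * Nat.choose (n - 2 * c + 1) (m - c - k)) := by
  obtain ⟨K, rfl⟩ := Nat.exists_eq_succ_of_ne_zero (NeZero.ne n)
  have hseries := congrArg (coeff m) <| eq_mul_mk_choose_of_one_sub_X_pow_mul_eq <|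
    one_sub_X_pow_mul_sum_enrichedSeries_rotF w hc
  simp only [add_mul, smul_mul_assoc, map_add, map_nsmul, map_sum, enrichedSeries, coeff_mk,
    coeff_X_pow_mul_one_add_X_pow_mul_mk_choose, Nat.add_sub_add_right] at hseries
  simp only [nsmul_eq_mul] at hseries
  rw [card_enrichedToric, ← Int.natCast_inj]
  simp only [Nat.sub_sub m 1 c, Nat.add_comm 1 c]
  exact_mod_cast hseries
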